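/- In the CreditRisk⁺ model, fix i ∈ {1,…,n}, a nonnegative integer t, and set Y = L − ν_i N_i. Then the following are equivalent: (a) P_α[L = t − ν_i] = 0 (interpreted as holding trivially if t < ν_i); (b) P_α[Y = t − m ν_i] = 0 for every integer m with 1 ≤ m ≤ t/ν_i; (c) P_α[L = t] = P_α[Y = t, N_i = 0]; (d) the events {L = t} and {Y = t} ∩ {N_i = 0} coincide up to a P_α-null set. -/

import Mathlib

open MeasureTheory ProbabilityTheory Real

noncomputable section

/-- The gamma measure is sigma-finite (needed to form product measures). -/
instance gammaMeasure.instSigmaFinite (a r : ℝ) :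
    SigmaFinite (gammaMeasure a r) := by
  unfold ProbabilityTheory.gammaMeasure ProbabilityTheory.gammaPDF
  infer_instance

/-- Conditional Poisson intensity `R_i(s) = r_{0,i} S_0 + sum_j r_{j,i} s_j`. -/
def crpR {n k : ℕ} (S0 : ℝ) (r0 : Fin n → ℝ) (r : Fin k → Fin n → ℝ)
    (s : Fin k → ℝ) (i : Fin n) : ℝ :=
  r0 i * S0 + ∑ j, r j i * s j

/-- The CreditRisk⁺ measure `P_α` on `(Fin k → ℝ) × (Fin n → ℕ)`: the product of the
Gamma factor measures (shape `α j`, scale `β j`, i.e. rate `(β j)⁻¹`), composed with the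
kernel sending the factor vector `s` to the product of Poisson measures with means `R_i(s)`,
recorded jointly with `s`. -/
def crpMeasure {n k : ℕ} (S0 : ℝ) (r0 : Fin n → ℝ) (r : Fin k → Fin n → ℝ)
    (α β : Fin k → ℝ) : Measure ((Fin k → ℝ) × (Fin n → ℕ)) :=
  (Measure.pi fun j => gammaMeasure (α j) (β j)⁻¹).bind fun s =>
    (Measure.pi fun i => poissonMeasure (crpR S0 r0 r s i).toNNReal).map fun x => (s, x)

/-- Portfolio loss `L = ∑ ν_i N_i`. -/
def crpLoss {n k : ℕ} (ν : Fin n → ℕ) (x : (Fin k → ℝ) × (Fin n → ℕ)) : ℕ :=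
  ∑ i, ν i * x.2 i

/-- Value-at-risk of the ℕ-valued loss `L` at level `δ`: the smallest `l` with
`P[L ≤ l] ≥ δ` (a natural number since `L` is ℕ-valued). -/
def crpVaR {n k : ℕ} (P : Measure ((Fin k → ℝ) × (Fin n → ℕ)))
    (ν : Fin n → ℕ) (δ : ℝ) : ℕ :=
  sInf {l : ℕ | ENNReal.ofReal δ ≤ P {x | crpLoss ν x ≤ l}}

/-- `ρ_g`, the radius of convergence of the probability generating function. -/
def crpRadius {n k : ℕ} (ν : Fin n → ℕ) (r : Fin k → Fin n → ℝ) (β : Fin k → ℝ) : ℝ :=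
  sSup {z : ℝ | 0 < z ∧ ∀ j, ∑ i, r j i * z ^ ν i < 1 + (β j)⁻¹}

/-!
Split the loss as `L = Y + ν_i N_i`. Given the factors, almost surely all positive, every vector
of counts has positive probability; changing the `i`-th coordinate of such a vector does not affect
`Y`, so whenever `Y = y` is possible, so is `Y = y, N_i = m` for every `m`. Decomposing by the value
of `N_i`, the event `L = t, N_i ≥ 1` is therefore null iff all the events `Y = t - m ν_i` with
`m ≥ 1` are, and `L = t - ν_i` is null iff all the events `Y = t - (m + 1) ν_i` with `m ≥ 0` are,
which is the same condition. The event `L = t, N_i ≥ 1` is the difference between `L = t` and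
`Y = t, N_i = 0`.
-/

lemma measurable_poissonMeasure : Measurable poissonMeasure := by
  refine Measure.measurable_of_measurable_coe _ fun s hs => ?_
  simp only [poissonMeasure, Measure.sum_apply _ hs, Measure.smul_apply]
  fun_prop

lemma measurable_measure_pi {ι A : Type*} [Fintype ι] [MeasurableSpace A] {X : ι → Type*}
    [∀ i, MeasurableSpace (X i)] {κ : ∀ i, A → Measure (X i)}
    [∀ i a, IsFiniteMeasure (κ i a)] (hκ : ∀ i, Measurable (κ i)) :
    Measurable fun a => Measure.pi fun i => κ i a := by
  have measurable_box (s : ∀ i, Set (X i)) (hs : ∀ i, MeasurableSet (s i)) :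
      Measurable fun a => (Measure.pi fun i => κ i a) (Set.univ.pi s) := by
    simp only [Measure.pi_pi]
    exact Finset.measurable_prod _ fun i _ => (Measure.measurable_coe (hs i)).comp (hκ i)
  refine Measurable.measure_of_isPiSystem generateFrom_pi.symm isPiSystem_pi ?_ ?_
  · rintro _ ⟨s, hs, rfl⟩
    exact measurable_box s fun i => hs i trivial
  · simpa only [Set.pi_univ] using measurable_box (fun _ => Set.univ) fun _ => .univ

lemma compProd_snd_eq_zero_iff {A B : Type*} [MeasurableSpace A] [MeasurableSpace B]
    {μ : Measure A} [SFinite μ] [NeZero μ] {κ : Kernel A B} [IsSFiniteKernel κ]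
    (hκ : ∀ᵐ a ∂μ, ∀ b, κ a {b} ≠ 0) (p : B → Prop) :
    (μ ⊗ₘ κ) {x | p x.2} = 0 ↔ ∀ b, ¬ p b := by
  refine ⟨fun h b hb => ?_, fun h => by simp [h]⟩
  have h_ae : ∀ᵐ x ∂(μ ⊗ₘ κ), ¬ p x.2 := by simpa only [ae_iff, not_not] using h
  obtain ⟨a, ha, ha_pos⟩ := ((Measure.ae_ae_of_ae_compProd h_ae).and hκ).exists
  exact ha_pos b (measure_mono_null (by simpa using hb) (ae_iff.1 ha))

lemma gammaMeasure_ae_pos (a r : ℝ) : ∀ᵐ x ∂gammaMeasure a r, 0 < x := by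
  have measurable_pdf : Measurable (gammaPDF a r) := (measurable_gammaPDFReal a r).ennreal_ofReal
  rw [gammaMeasure, ae_withDensity_iff measurable_pdf]
  filter_upwards [Measure.ae_ne volume 0] with x hx hpdf
  exact hx.symm.lt_of_le (not_lt.1 fun hneg => hpdf (gammaPDF_of_neg hneg))

section CreditRiskPlus

variable {n k : ℕ} {S0 : ℝ} {r0 : Fin n → ℝ} {r : Fin k → Fin n → ℝ} {α β : Fin k → ℝ}

lemma crpR_pos (hS0 : 0 ≤ S0) (hr0 : ∀ i, 0 ≤ r0 i) (hr : ∀ j i, 0 ≤ r j i)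
    (hrpos : ∀ i, 0 < ∑ j, r j i) {s : Fin k → ℝ} (hs : ∀ j, 0 < s j) (i : Fin n) :
    0 < crpR S0 r0 r s i := by
  obtain ⟨j, -, hj⟩ := (Finset.sum_pos_iff_of_nonneg fun j _ => hr j i).1 (hrpos i)
  exact add_pos_of_nonneg_of_pos (mul_nonneg (hr0 i) hS0)
    (Finset.sum_pos' (fun j _ => mul_nonneg (hr j i) (hs j).le)
      ⟨j, Finset.mem_univ j, mul_pos hj (hs j)⟩)

/-- The conditional law of the counts `N` given the factors `S = s`, as a Markov kernel. -/
def crpKernel (S0 : ℝ) (r0 : Fin n → ℝ) (r : Fin k → Fin n → ℝ) :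
    Kernel (Fin k → ℝ) (Fin n → ℕ) where
  toFun s := Measure.pi fun i => poissonMeasure (crpR S0 r0 r s i).toNNReal
  measurable' := by
    refine measurable_measure_pi fun i => measurable_poissonMeasure.comp ?_
    unfold crpR
    fun_prop

lemma crpKernel_apply (s : Fin k → ℝ) :
    crpKernel S0 r0 r s = Measure.pi fun i => poissonMeasure (crpR S0 r0 r s i).toNNReal :=
  rfl

instance : IsMarkovKernel (crpKernel S0 r0 r) :=
  ⟨fun s => by rw [crpKernel_apply]; infer_instance⟩

lemma crpKernel_singleton_ne_zero (hS0 : 0 ≤ S0) (hr0 : ∀ i, 0 ≤ r0 i) (hr : ∀ j i, 0 ≤ r j i)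
    (hrpos : ∀ i, 0 < ∑ j, r j i) {s : Fin k → ℝ} (hs : ∀ j, 0 < s j) (v : Fin n → ℕ) :
    crpKernel S0 r0 r s {v} ≠ 0 := by
  rw [crpKernel_apply, Measure.pi_singleton]
  refine Finset.prod_ne_zero_iff.2 fun i _ => ?_
  have intensity_pos := Real.toNNReal_pos.2 (crpR_pos hS0 hr0 hr hrpos hs i)
  exact (measureReal_ne_zero_iff).1 (poissonMeasure_real_singleton_pos (v i) intensity_pos).ne'

lemma crpMeasure_eq_compProd :
    crpMeasure S0 r0 r α β =
      (Measure.pi fun j => gammaMeasure (α j) (β j)⁻¹) ⊗ₘ crpKernel S0 r0 r := by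
  rw [Measure.compProd_eq_comp_prod, crpMeasure]
  congr 1 with s : 1
  rw [Kernel.prod_apply, Kernel.id_apply, Measure.dirac_prod, crpKernel_apply]

lemma isProbabilityMeasure_pi_gammaMeasure (hα : ∀ j, 0 < α j) (hβ : ∀ j, 0 < β j) :
    IsProbabilityMeasure (Measure.pi fun j => gammaMeasure (α j) (β j)⁻¹) := by
  have (j : Fin k) := isProbabilityMeasure_gammaMeasure (hα j) (inv_pos.2 (hβ j))
  infer_instance

lemma isProbabilityMeasure_crpMeasure (hα : ∀ j, 0 < α j) (hβ : ∀ j, 0 < β j) :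
    IsProbabilityMeasure (crpMeasure S0 r0 r α β) := by
  have := isProbabilityMeasure_pi_gammaMeasure hα hβ
  rw [crpMeasure_eq_compProd]
  infer_instance

lemma crpMeasure_counts_eq_zero_iff (hS0 : 0 ≤ S0) (hr0 : ∀ i, 0 ≤ r0 i)
    (hr : ∀ j i, 0 ≤ r j i) (hrpos : ∀ i, 0 < ∑ j, r j i) (hα : ∀ j, 0 < α j)
    (hβ : ∀ j, 0 < β j) (p : (Fin n → ℕ) → Prop) :
    crpMeasure S0 r0 r α β {x | p x.2} = 0 ↔ ∀ v, ¬ p v := by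
  have := isProbabilityMeasure_pi_gammaMeasure hα hβ
  have factors_pos : ∀ᵐ s ∂(Measure.pi fun j => gammaMeasure (α j) (β j)⁻¹), ∀ j, 0 < s j :=
    ae_all_iff.2 fun j => Measure.tendsto_eval_ae_ae.eventually (gammaMeasure_ae_pos _ _)
  rw [crpMeasure_eq_compProd]
  exact compProd_snd_eq_zero_iff
    (factors_pos.mono fun s hs => crpKernel_singleton_ne_zero hS0 hr0 hr hrpos hs) p

lemma measurable_crpLoss (ν : Fin n → ℕ) : Measurable (crpLoss (k := k) ν) := by
  unfold crpLoss
  fun_prop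

lemma crpLoss_eq_add_sum_erase (ν : Fin n → ℕ) (x : (Fin k → ℝ) × (Fin n → ℕ)) (i : Fin n) :
    crpLoss ν x = ν i * x.2 i + ∑ l ∈ Finset.univ.erase i, ν l * x.2 l :=
  (Finset.add_sum_erase _ _ (Finset.mem_univ i)).symm

lemma mul_le_crpLoss (ν : Fin n → ℕ) (x : (Fin k → ℝ) × (Fin n → ℕ)) (i : Fin n) :
    ν i * x.2 i ≤ crpLoss ν x :=
  (crpLoss_eq_add_sum_erase ν x i).symm ▸ Nat.le_add_right _ _

lemma crpMeasure_rest_eq_zero_of_joint_eq_zero (hS0 : 0 ≤ S0) (hr0 : ∀ i, 0 ≤ r0 i)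
    (hr : ∀ j i, 0 ≤ r j i) (hrpos : ∀ i, 0 < ∑ j, r j i) (hα : ∀ j, 0 < α j)
    (hβ : ∀ j, 0 < β j) (ν : Fin n → ℕ) (i : Fin n) (y m : ℕ)
    (h : crpMeasure S0 r0 r α β {x | crpLoss ν x - ν i * x.2 i = y ∧ x.2 i = m} = 0) :
    crpMeasure S0 r0 r α β {x | crpLoss ν x - ν i * x.2 i = y} = 0 := by
  have null_iff := crpMeasure_counts_eq_zero_iff hS0 hr0 hr hrpos hα hβ
  simp only [crpLoss_eq_add_sum_erase ν _ i, Nat.add_sub_cancel_left] at h ⊢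
  refine (null_iff fun v => ∑ l ∈ Finset.univ.erase i, ν l * v l = y).2 fun v hv => ?_
  refine (null_iff fun v => ∑ l ∈ Finset.univ.erase i, ν l * v l = y ∧ v i = m).1 h
    (Function.update v i m) ⟨?_, Function.update_self i m v⟩
  rw [← hv]
  refine Finset.sum_congr rfl fun l hl => ?_
  rw [Function.update_of_ne (Finset.ne_of_mem_erase hl)]

end CreditRiskPlus

section LossSplitting

variable {Ω : Type*} {mΩ : MeasurableSpace Ω} {μ : Measure Ω} {Y N : Ω → ℕ} {c t : ℕ}

lemma measure_add_mul_eq_and_eq_zero_iff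
    (h_joint : ∀ y m, μ {ω | Y ω = y ∧ N ω = m} = 0 → μ {ω | Y ω = y} = 0)
    (p : ℕ → Prop) :
    μ {ω | Y ω + c * N ω = t ∧ p (N ω)} = 0 ↔
      ∀ m, p m → m * c ≤ t → μ {ω | Y ω = t - m * c} = 0 := by
  have slice_eq (m : ℕ) (hmt : m * c ≤ t) (ω : Ω) :
      (Y ω + c * N ω = t ∧ N ω = m) ↔ (Y ω = t - m * c ∧ N ω = m) := by
    refine and_congr_left fun hω => ?_
    rw [hω, mul_comm, eq_tsub_iff_add_eq_of_le hmt]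
  constructor
  · intro h m hm hmt
    refine h_joint _ m (measure_mono_null (fun ω hω => ?_) h)
    obtain ⟨hL, hN⟩ := (slice_eq m hmt ω).2 hω
    exact ⟨hL, hN ▸ hm⟩
  · intro h
    have union_null : μ (⋃ m, ⋃ (_ : p m ∧ m * c ≤ t), {ω | Y ω = t - m * c}) = 0 :=
      measure_iUnion_null fun m => measure_iUnion_null fun hm => h m hm.1 hm.2
    refine measure_mono_null (fun ω ⟨hL, hp⟩ => ?_) union_null
    have hle : N ω * c ≤ t := by rw [mul_comm]; omega
    exact Set.mem_iUnion₂.2 ⟨N ω, ⟨hp, hle⟩, ((slice_eq (N ω) hle ω).1 ⟨hL, rfl⟩).1⟩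

lemma measure_add_mul_eq_sub_eq_zero_iff
    (h_joint : ∀ y m, μ {ω | Y ω = y ∧ N ω = m} = 0 → μ {ω | Y ω = y} = 0) :
    (c ≤ t → μ {ω | Y ω + c * N ω = t - c} = 0) ↔
      ∀ m, 1 ≤ m → m * c ≤ t → μ {ω | Y ω = t - m * c} = 0 := by
  have split := measure_add_mul_eq_and_eq_zero_iff (c := c) (t := t - c) h_joint fun _ => True
  simp only [and_true, true_imp_iff] at split
  have shift (m : ℕ) : t - c - m * c = t - (m + 1) * c := by
    rw [Nat.sub_sub, Nat.succ_mul, add_comm c]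
  simp only [split, shift]
  constructor
  · intro h m hm hmt
    obtain ⟨m, rfl⟩ := Nat.exists_eq_add_of_le' hm
    rw [Nat.succ_mul] at hmt
    exact h (by omega) m (by omega)
  · intro h hct m hmt
    exact h (m + 1) (by omega) (by rw [Nat.succ_mul]; omega)

lemma ae_add_mul_eq_iff :
    (∀ᵐ ω ∂μ, (Y ω + c * N ω = t ↔ Y ω = t ∧ N ω = 0)) ↔
      μ {ω | Y ω + c * N ω = t ∧ 1 ≤ N ω} = 0 := by
  have not_iff (ω : Ω) : ¬ (Y ω + c * N ω = t ↔ Y ω = t ∧ N ω = 0) ↔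
      Y ω + c * N ω = t ∧ 1 ≤ N ω := by
    rcases Nat.eq_zero_or_pos (N ω) with h | h
    · simp [h]
    · simp [h.ne', Nat.one_le_iff_ne_zero]
  simp only [ae_iff, not_iff]

lemma measure_add_mul_eq_eq_iff_ae [IsFiniteMeasure μ] (hY : Measurable Y) (hN : Measurable N) :
    μ {ω | Y ω + c * N ω = t} = μ {ω | Y ω = t ∧ N ω = 0} ↔
      ∀ᵐ ω ∂μ, (Y ω + c * N ω = t ↔ Y ω = t ∧ N ω = 0) := by
  have subset : {ω | Y ω = t ∧ N ω = 0} ⊆ {ω | Y ω + c * N ω = t} := by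
    rintro ω ⟨hYω, hNω⟩
    simp [hYω, hNω]
  have measurable : MeasurableSet {ω | Y ω = t ∧ N ω = 0} :=
    (hY (measurableSet_singleton t)).inter (hN (measurableSet_singleton 0))
  refine ⟨fun h => ?_, fun h => measure_congr (h.mono fun ω hω => propext hω)⟩
  exact (ae_eq_of_subset_of_measure_ge subset h.le measurable.nullMeasurableSet
    (measure_ne_top μ _)).symm.mem_iff

end LossSplitting

theorem crp_remark_equivalences_general {Ω : Type*} {mΩ : MeasurableSpace Ω} {μ : Measure Ω}
    [IsFiniteMeasure μ] {L N : Ω → ℕ} (hL : Measurable L) (hN : Measurable N) {c : ℕ}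
    (hle : ∀ ω, c * N ω ≤ L ω)
    (h_joint : ∀ y m, μ {ω | L ω - c * N ω = y ∧ N ω = m} = 0 → μ {ω | L ω - c * N ω = y} = 0)
    (t : ℕ) :
    ((c ≤ t → μ {ω | L ω = t - c} = 0) ↔
      (∀ m : ℕ, 1 ≤ m → m * c ≤ t → μ {ω | L ω - c * N ω = t - m * c} = 0)) ∧
    ((∀ m : ℕ, 1 ≤ m → m * c ≤ t → μ {ω | L ω - c * N ω = t - m * c} = 0) ↔
      μ {ω | L ω = t} = μ {ω | L ω - c * N ω = t ∧ N ω = 0}) ∧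
    (μ {ω | L ω = t} = μ {ω | L ω - c * N ω = t ∧ N ω = 0} ↔
      ∀ᵐ ω ∂μ, (L ω = t ↔ (L ω - c * N ω = t ∧ N ω = 0))) := by
  obtain ⟨Y, hY, rfl⟩ : ∃ Y : Ω → ℕ, Measurable Y ∧ L = fun ω => Y ω + c * N ω :=
    ⟨fun ω => L ω - c * N ω, by fun_prop, funext fun ω => (Nat.sub_add_cancel (hle ω)).symm⟩
  simp only [Nat.add_sub_cancel] at h_joint ⊢
  have mass_iff_ae := measure_add_mul_eq_eq_iff_ae (μ := μ) (c := c) (t := t) hY hN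
  refine ⟨measure_add_mul_eq_sub_eq_zero_iff h_joint, ?_, mass_iff_ae⟩
  rw [mass_iff_ae, ae_add_mul_eq_iff, measure_add_mul_eq_and_eq_zero_iff h_joint]

/-- with `Y = L − ν_i N_i`, the following are equivalent:
(a) `P_α[L = t − ν_i] = 0` (trivially true when `t < ν_i`);
(b) `P_α[Y = t − m ν_i] = 0` for all `1 ≤ m ≤ t/ν_i`;
(c) `P_α[L = t] = P_α[Y = t, N_i = 0]`;
(d) `{L = t}` and `{Y = t, N_i = 0}` coincide up to a `P_α`-null set. -/
theorem crp_remark_equivalences {n k : ℕ} (hn : 0 < n) (hk : 0 < k)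
    (ν : Fin n → ℕ) (hν : ∀ i, 0 < ν i)
    (S0 : ℝ) (hS0 : 0 ≤ S0)
    (r0 : Fin n → ℝ) (r : Fin k → Fin n → ℝ)
    (hr0 : ∀ i, 0 ≤ r0 i) (hr : ∀ j i, 0 ≤ r j i)
    (hr0sum : ∑ i, r0 i = 1) (hrsum : ∀ j, ∑ i, r j i = 1)
    (hrpos : ∀ i, 0 < ∑ j, r j i)
    (α β : Fin k → ℝ) (hα : ∀ j, 0 < α j) (hβ : ∀ j, 0 < β j)
    (i : Fin n) (t : ℕ) :
    ((ν i ≤ t → (crpMeasure S0 r0 r α β) {x | crpLoss ν x = t - ν i} = 0) ↔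
      (∀ m : ℕ, 1 ≤ m → m * ν i ≤ t →
        (crpMeasure S0 r0 r α β) {x | crpLoss ν x - ν i * x.2 i = t - m * ν i} = 0)) ∧
    ((∀ m : ℕ, 1 ≤ m → m * ν i ≤ t →
        (crpMeasure S0 r0 r α β) {x | crpLoss ν x - ν i * x.2 i = t - m * ν i} = 0) ↔
      (crpMeasure S0 r0 r α β) {x | crpLoss ν x = t}
        = (crpMeasure S0 r0 r α β) {x | crpLoss ν x - ν i * x.2 i = t ∧ x.2 i = 0}) ∧
    ((crpMeasure S0 r0 r α β) {x | crpLoss ν x = t}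
        = (crpMeasure S0 r0 r α β) {x | crpLoss ν x - ν i * x.2 i = t ∧ x.2 i = 0} ↔
      ∀ᵐ x ∂(crpMeasure S0 r0 r α β),
        (crpLoss ν x = t ↔ (crpLoss ν x - ν i * x.2 i = t ∧ x.2 i = 0))) := by
  have := isProbabilityMeasure_crpMeasure (S0 := S0) (r0 := r0) (r := r) hα hβ
  exact crp_remark_equivalences_general (measurable_crpLoss ν) (by fun_prop)
    (mul_le_crpLoss ν · i)
    (crpMeasure_rest_eq_zero_of_joint_eq_zero hS0 hr0 hr hrpos hα hβ ν i) t
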